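/- For every ε > 0 there exists k_0 such that for all integers k ≥ k_0, the k-colour list Ramsey number of the triangle satisfies R_ℓ(K_3, k) ≤ (4 + ε)^k. -/

import Mathlib

/-- A colouring `c` of the edges of the complete graph on `Fin n` contains a
monochromatic copy of the graph `G`. -/
def HasMonoCopy {α β : Type*} (G : SimpleGraph α) {n : ℕ} (c : Sym2 (Fin n) → β) : Prop :=
  ∃ (f : α → Fin n) (x : β), Function.Injective f ∧
    ∀ a b, G.Adj a b → c s(f a, f b) = x

/-- The `k`-colour list Ramsey number of a graph `G`: the least `n` for which one can
assign a list of `k` colours to each edge of `K_n` so that every colouring of the edges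
from these lists contains a monochromatic copy of `G`. -/
noncomputable def listRamsey {α : Type*} (G : SimpleGraph α) (k : ℕ) : ℕ :=
  sInf { n : ℕ | ∃ L : Sym2 (Fin n) → Finset ℕ,
    (∀ e : Sym2 (Fin n), ¬ e.IsDiag → (L e).card = k) ∧
    ∀ c : Sym2 (Fin n) → ℕ, (∀ e : Sym2 (Fin n), ¬ e.IsDiag → c e ∈ L e) →
      HasMonoCopy G c }

/-!
Give every edge of `K_n` a random `k`-subset of a palette of `M = r k` colours. A good colouring
from the lists consists of `M` triangle-free graphs, one per colour, such that every edge `e` has a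
colour of its list whose graph contains `e`. Triangle-free graphs on `n` vertices are covered by
`exp (n ^ (3 / 2 + o(1)))` containers with at most `(1 / 4 + o(1)) n ^ 2` edges each, so it
suffices to defeat every choice of one container per colour. Averaged over the edges, such a choice
covers `e` in about half of the palette, so the list of `e` avoids all of its containers with
probability about `2 ^ (-k)`; by convexity and independence, the probability that no edge has this
property is at most `exp (-c ^ k n ^ 2)` for any `c < 1 / 2`. The union bound succeeds once `√n`
exceeds `c ^ (-k)` by more than a polynomial factor in `k`, that is, for `n` about `4 ^ k`.

The containers come from the linear 3-uniform hypergraph whose vertices are the pairs of vertices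
of `K_n` and whose edges are the triangles. If `f` belongs to an independent set `I`, then adding
the link of `f` to a graph `P` keeps `I` independent in `P`. Doing this greedily, with the degrees
of `P` capped, leads after few steps to a graph `P` that contains almost all of the link of every
vertex of `I`, apart from edges at vertices of full degree. If `P` is sparse, then the vertices
with this property span few triangles; if `P` is dense, then the same greedy procedure on `P`
confines `I` to a proper fraction of the vertices, and one iterates.
-/

open Finset

section Containers

theorem exists_greedy_family {S E : Type*} [Fintype E] (step : S → E → S) (φ : S → ℕ) {g : ℕ}
    (hg : 0 < g) (m : ℕ) (s : S) (hs : φ s ≤ g * m) :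
    ∃ F : Finset S, #F ≤ (Fintype.card E + 1) ^ m ∧ ∀ I : Set E, ∃ t ∈ F,
      Relation.ReflTransGen (fun a b => ∃ f ∈ I, step a f = b) s t ∧
        ∀ f ∈ I, φ t < φ (step t f) + g := by
  classical
  induction m generalizing s with
  | zero => exact ⟨{s}, by simp, fun I => ⟨s, by simp, .refl, fun f _ => by omega⟩⟩
  | succ m ih =>
    have branch (f : E) (hf : φ (step s f) + g ≤ φ s) :=
      ih (step s f) (by rw [mul_add_one] at hs; omega)
    choose! F hF hreach using branch
    set heavy : Finset E := {f | φ (step s f) + g ≤ φ s}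
    refine ⟨insert s (heavy.biUnion F), ?_, fun I => ?_⟩
    · calc #(insert s (heavy.biUnion F)) ≤ #(heavy.biUnion F) + 1 := card_insert_le _ _
        _ ≤ #heavy * (Fintype.card E + 1) ^ m + 1 := by
          gcongr
          exact card_biUnion_le_card_mul _ _ _ fun f hf => hF f (mem_filter.1 hf).2
        _ ≤ Fintype.card E * (Fintype.card E + 1) ^ m + (Fintype.card E + 1) ^ m := by
          gcongr
          · exact card_le_univ _
          · exact Nat.one_le_pow _ _ (Nat.succ_pos _)
        _ = (Fintype.card E + 1) ^ (m + 1) := by ring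
    · by_cases hI : ∃ f ∈ I, φ (step s f) + g ≤ φ s
      · obtain ⟨f, hfI, hf⟩ := hI
        obtain ⟨t, htF, hst, ht⟩ := hreach f hf I
        exact ⟨t, mem_insert_of_mem (mem_biUnion.2 ⟨f, by simpa [heavy] using hf, htF⟩),
          .head ⟨f, hfI, rfl⟩ hst, ht⟩
      · push Not at hI
        exact ⟨s, mem_insert_self _ _, .refl, hI⟩

variable {E : Type*} [DecidableEq E]

/-- A linear hypergraph, encoded as its family of edges: distinct edges share at most one
vertex. -/
def IsLinearFamily (H : Finset (Finset E)) : Prop :=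
  (H : Set (Finset E)).Pairwise fun h h' => #(h ∩ h') ≤ 1

omit [DecidableEq E] in
/-- Independence of a vertex set `I` in the hypergraph with edge family `H`. -/
def IsIndependentIn (H : Finset (Finset E)) (I : Set E) : Prop :=
  ∀ h ∈ H, ¬ (h : Set E) ⊆ I

/-- The edges of the link of `f` in `H` that lie in `A` and all of whose vertices still have degree
less than `D` in the family `P`. These are the edges that can be added to `P` without pushing
degrees above `D`, provided `H` is linear. -/
def openLink (H : Finset (Finset E)) (A : Finset E) (D : ℕ) (P : Finset (Finset E)) (f : E) :
    Finset (Finset E) :=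
  {p ∈ H.memberSubfamily f | p ⊆ A ∧ ∀ x ∈ p, #{p' ∈ P | x ∈ p'} < D}

/-- An `r`-uniform hypergraph on the vertex set `A`, encoded as its family of edges, with maximum
degree at most `D`. -/
structure IsCappedFamily (A : Finset E) (r D : ℕ) (P : Finset (Finset E)) : Prop where
  sized : (P : Set (Finset E)).Sized r
  subset : ∀ p ∈ P, p ⊆ A
  degree_le : ∀ x, #{p ∈ P | x ∈ p} ≤ D

/-- The vertices of `A` whose open link in `H` has fewer than `g` edges outside `P`. -/
def lowLinkVertices (H : Finset (Finset E)) (A : Finset E) (D : ℕ) (P : Finset (Finset E))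
    (g : ℕ) : Finset E :=
  {f ∈ A | #(openLink H A D P f \ P) < g}

theorem IsLinearFamily.eq_of_mem {H : Finset (Finset E)} (hH : IsLinearFamily H) {h h' : Finset E}
    (hh : h ∈ H) (hh' : h' ∈ H) {x y : E} (hxy : x ≠ y) (hx : x ∈ h) (hy : y ∈ h) (hx' : x ∈ h')
    (hy' : y ∈ h') : h = h' := by
  by_contra hne
  exact hxy (card_le_one.1 (hH hh hh' hne) x (mem_inter.2 ⟨hx, hx'⟩) y (mem_inter.2 ⟨hy, hy'⟩))

theorem isLinearFamily_of_sized_two {P : Finset (Finset E)} (hP : (P : Set (Finset E)).Sized 2) :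
    IsLinearFamily P := by
  intro p hp p' hp' hne
  have hlt : #(p ∩ p') < #p := card_lt_card <| inter_subset_left.ssubset_of_ne fun h =>
    hne (eq_of_subset_of_card_le (inter_eq_left.1 h) (by rw [hP hp, hP hp']))
  rw [hP hp] at hlt
  omega

theorem IsCappedFamily.card_le [Fintype E] {A : Finset E} {r D : ℕ} {P : Finset (Finset E)}
    (hP : IsCappedFamily A r D P) (hr : 0 < r) : #P ≤ D * Fintype.card E := by
  calc #P ≤ ∑ p ∈ P, #p := by
        rw [card_eq_sum_ones]
        exact sum_le_sum fun p hp => (hP.sized hp).symm ▸ hr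
    _ ≤ Fintype.card E * D := sum_card_le hP.degree_le
    _ = D * Fintype.card E := mul_comm _ _

theorem IsLinearFamily.card_filter_openLink_le_one {H : Finset (Finset E)} (hH : IsLinearFamily H)
    (A : Finset E) (D : ℕ) (P : Finset (Finset E)) (f x : E) :
    #{p ∈ openLink H A D P f | x ∈ p} ≤ 1 := by
  refine card_le_one.2 fun p hp p' hp' => ?_
  simp only [openLink, mem_filter, mem_memberSubfamily] at hp hp'
  obtain ⟨⟨⟨hpH, hfp⟩, -⟩, hxp⟩ := hp
  obtain ⟨⟨⟨hpH', hfp'⟩, -⟩, hxp'⟩ := hp'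
  have hins := hH.eq_of_mem hpH hpH' (x := f) (y := x) (fun h => hfp (h ▸ hxp)) (by simp)
    (by simp [hxp]) (by simp) (by simp [hxp'])
  rw [← erase_insert hfp, hins, erase_insert hfp']

theorem IsCappedFamily.union_openLink {H : Finset (Finset E)} {A : Finset E} {r D : ℕ}
    {P : Finset (Finset E)} (hP : IsCappedFamily A r D P) (hlin : IsLinearFamily H)
    (hH : (H : Set (Finset E)).Sized (r + 1)) (f : E) :
    IsCappedFamily A r D (P ∪ openLink H A D P f) where
  sized := by
    intro p hp
    rcases mem_union.1 hp with hp | hp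
    · exact hP.sized hp
    · obtain ⟨hpH, hfp⟩ := mem_memberSubfamily.1 (mem_filter.1 hp).1
      have hcard := hH hpH
      rwa [card_insert_of_notMem hfp, add_left_inj] at hcard
  subset p hp := (mem_union.1 hp).elim (hP.subset p) fun h => (mem_filter.1 h).2.1
  degree_le x := by
    rw [filter_union]
    refine (card_union_le _ _).trans ?_
    obtain hempty | ⟨p, hp⟩ := {p ∈ openLink H A D P f | x ∈ p}.eq_empty_or_nonempty
    · simpa [hempty] using hP.degree_le x
    · obtain ⟨hpo, hxp⟩ := mem_filter.1 hp
      have hlt := (mem_filter.1 hpo).2.2 x hxp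
      have hone := hlin.card_filter_openLink_le_one A D P f x
      omega

theorem IsIndependentIn.union_openLink {H P : Finset (Finset E)} {I : Set E}
    (hI : IsIndependentIn H I) (hPI : IsIndependentIn P I) (A : Finset E) (D : ℕ) {f : E}
    (hf : f ∈ I) : IsIndependentIn (P ∪ openLink H A D P f) I := by
  intro p hp hpI
  rcases mem_union.1 hp with hp | hp
  · exact hPI p hp hpI
  · refine hI _ (mem_memberSubfamily.1 (mem_filter.1 hp).1).1 ?_
    rw [coe_insert]
    exact Set.insert_subset hf hpI

theorem exists_cappedFamilies [Fintype E] {H : Finset (Finset E)} (hlin : IsLinearFamily H)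
    {r : ℕ} (hr : 0 < r) (hH : (H : Set (Finset E)).Sized (r + 1)) (A : Finset E) {D g m : ℕ}
    (hg : 0 < g) (hm : D * Fintype.card E ≤ g * m) :
    ∃ 𝓟 : Finset (Finset (Finset E)), #𝓟 ≤ (Fintype.card E + 1) ^ m ∧
      (∀ P ∈ 𝓟, IsCappedFamily A r D P) ∧ ∀ I : Set E, I ⊆ A → IsIndependentIn H I →
        ∃ P ∈ 𝓟, IsIndependentIn P I ∧ I ⊆ lowLinkVertices H A D P g := by
  classical
  obtain ⟨F, hF, hreach⟩ := exists_greedy_family (fun P f => P ∪ openLink H A D P f)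
    (fun P => D * Fintype.card E - #P) hg m ∅ (by simpa using hm)
  refine ⟨{P ∈ F | IsCappedFamily A r D P}, (card_filter_le _ _).trans hF,
    fun P hP => (mem_filter.1 hP).2, fun I hIA hI => ?_⟩
  obtain ⟨P, hPF, hpath, hlow⟩ := hreach I
  have hinv : IsCappedFamily A r D P ∧ IsIndependentIn P I := by
    clear hPF hlow
    induction hpath with
    | refl => exact ⟨⟨by simp [Set.Sized], by simp, by simp⟩, by simp [IsIndependentIn]⟩
    | tail _ hstep ih =>
      obtain ⟨f, hf, rfl⟩ := hstep
      exact ⟨ih.1.union_openLink hlin hH f, hI.union_openLink ih.2 A D hf⟩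
  refine ⟨P, mem_filter.2 ⟨hPF, hinv.1⟩, hinv.2, fun f hf => mem_coe.2 <|
    mem_filter.2 ⟨hIA hf, ?_⟩⟩
  have hbound := (hinv.1.union_openLink hlin hH f).card_le hr
  have hdrop := hlow f hf
  have hcard := card_sdiff_add_card (openLink H A D P f) P
  rw [union_comm] at hcard
  omega

theorem filter_subset_lowLinkVertices_subset {H P : Finset (Finset E)} (hne : ∀ h ∈ H, h.Nonempty)
    {W : Finset E} {D : ℕ} (hW : ∀ x ∉ W, #{p ∈ P | x ∈ p} < D) (A : Finset E) (g : ℕ) :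
    {h ∈ H | h ⊆ lowLinkVertices H A D P g} ⊆ P.biUnion (fun p => {h ∈ H | p ⊆ h}) ∪
      W.biUnion (fun x => {h ∈ H | x ∈ h}) ∪
      (lowLinkVertices H A D P g).biUnion
        (fun f => (openLink H A D P f \ P).image (insert f)) := by
  intro h hh
  obtain ⟨hhH, hhC⟩ := mem_filter.1 hh
  obtain ⟨f, hf⟩ := hne h hhH
  by_cases hhW : ∃ x ∈ W, x ∈ h
  · obtain ⟨x, hxW, hxh⟩ := hhW
    exact mem_union_left _ (mem_union_right _ (mem_biUnion.2 ⟨x, hxW, by simp [hhH, hxh]⟩))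
  by_cases hfP : h.erase f ∈ P
  · exact mem_union_left _ (mem_union_left _
      (mem_biUnion.2 ⟨_, hfP, by simp [hhH, erase_subset]⟩))
  refine mem_union_right _ (mem_biUnion.2 ⟨f, hhC hf, mem_image.2 ⟨h.erase f, mem_sdiff.2
    ⟨mem_filter.2 ⟨?_, ?_, fun x hx => ?_⟩, hfP⟩, insert_erase hf⟩⟩)
  · simp [insert_erase hf, hhH]
  · exact (erase_subset f h).trans (hhC.trans (filter_subset _ _))
  · exact hW x fun hxW => hhW ⟨x, hxW, mem_of_mem_erase hx⟩

theorem card_filter_subset_lowLinkVertices_le {H P : Finset (Finset E)} (hlin : IsLinearFamily H)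
    (hne : ∀ h ∈ H, h.Nonempty) {r : ℕ} (hr : 1 < r) (hP : (P : Set (Finset E)).Sized r) {Δ : ℕ}
    (hΔ : ∀ x, #{h ∈ H | x ∈ h} ≤ Δ) {W : Finset E} {D : ℕ}
    (hW : ∀ x ∉ W, #{p ∈ P | x ∈ p} < D) (A : Finset E) (g : ℕ) :
    #{h ∈ H | h ⊆ lowLinkVertices H A D P g} ≤ #P + #W * Δ + #A * g := by
  have hP1 : #(P.biUnion fun p => {h ∈ H | p ⊆ h}) ≤ #P * 1 := by
    refine card_biUnion_le_card_mul _ _ _ fun p hp => card_le_one.2 fun h hh h' hh' => ?_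
    obtain ⟨x, hx, y, hy, hxy⟩ := one_lt_card.1 (hr.trans_eq (hP hp).symm)
    simp only [mem_filter] at hh hh'
    exact hlin.eq_of_mem hh.1 hh'.1 hxy (hh.2 hx) (hh.2 hy) (hh'.2 hx) (hh'.2 hy)
  have hWΔ : #(W.biUnion fun x => {h ∈ H | x ∈ h}) ≤ #W * Δ :=
    card_biUnion_le_card_mul _ _ _ fun x _ => hΔ x
  have hCg : #((lowLinkVertices H A D P g).biUnion
      fun f => (openLink H A D P f \ P).image (insert f)) ≤ #A * g :=
    (card_biUnion_le_card_mul _ _ _ fun f hf => card_image_le.trans (mem_filter.1 hf).2.le).trans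
      (Nat.mul_le_mul_right g (card_le_card (filter_subset _ _)))
  calc #{h ∈ H | h ⊆ lowLinkVertices H A D P g}
      ≤ _ := card_le_card (filter_subset_lowLinkVertices_subset hne hW A g)
    _ ≤ #P * 1 + #W * Δ + #A * g :=
      (card_union_le _ _).trans (add_le_add ((card_union_le _ _).trans (add_le_add hP1 hWΔ)) hCg)
    _ = #P + #W * Δ + #A * g := by rw [mul_one]

theorem IsCappedFamily.card_filter_mem_subset_le {A : Finset E} {D : ℕ} {P Q : Finset (Finset E)}
    (hP : IsCappedFamily A 2 D P) (hQ : (Q : Set (Finset E)).Sized 1) {C : Finset E}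
    (hCQ : ∀ y ∈ C, {y} ∉ Q) {t : ℕ} {x : E} (hx : x ∈ lowLinkVertices P A 1 Q t) :
    #{p ∈ P | x ∈ p ∧ p ⊆ C} ≤ t := by
  refine le_trans ?_ (mem_filter.1 hx).2.le
  refine card_le_card_of_injOn (fun p => p.erase x) (fun p hp => ?_) ?_
  · obtain ⟨hpP, hxp, hpC⟩ := mem_filter.1 (mem_coe.1 hp)
    obtain ⟨y, hy⟩ := card_eq_one.1 (show #(p.erase x) = 1 by
      rw [card_erase_of_mem hxp, hP.sized hpP])
    have hyQ := hCQ y (hpC (mem_of_mem_erase (a := x) (hy ▸ mem_singleton_self y)))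
    refine mem_coe.2 (mem_sdiff.2 ⟨mem_filter.2 ⟨?_, ?_, fun z hz => ?_⟩, ?_⟩)
    · simp [insert_erase hxp, hpP]
    · exact (erase_subset x p).trans (hP.subset p hpP)
    · obtain rfl : z = y := mem_singleton.1 (hy ▸ hz)
      refine Nat.lt_one_iff.2 (card_eq_zero.2 (filter_eq_empty_iff.2 fun q hq hzq => hyQ ?_))
      obtain ⟨w, rfl⟩ := card_eq_one.1 (hQ hq)
      rwa [mem_singleton.1 hzq]
    · simpa only [hy] using hyQ
  · exact (erase_injOn' x).mono fun p hp => (mem_filter.1 (mem_coe.1 hp)).2.1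

theorem IsCappedFamily.card_le_card_sdiff_mul_add {A : Finset E} {D : ℕ} {P Q : Finset (Finset E)}
    (hP : IsCappedFamily A 2 D P) (hQ : (Q : Set (Finset E)).Sized 1) {C : Finset E} {t : ℕ}
    (hC : C ⊆ lowLinkVertices P A 1 Q t) (hCQ : ∀ y ∈ C, {y} ∉ Q) :
    #P ≤ #(A \ C) * D + #C * t := by
  have hcover : P ⊆ (A \ C).biUnion (fun x => {p ∈ P | x ∈ p}) ∪
      C.biUnion (fun x => {p ∈ P | x ∈ p ∧ p ⊆ C}) := by
    intro p hp
    obtain ⟨x, hx⟩ : p.Nonempty := card_pos.1 (by simp [hP.sized hp])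
    by_cases hpC : p ⊆ C
    · exact mem_union_right _ (mem_biUnion.2 ⟨x, hpC hx, by simp [hp, hx, hpC]⟩)
    · obtain ⟨y, hy, hyC⟩ := not_subset.1 hpC
      exact mem_union_left _ (mem_biUnion.2
        ⟨y, mem_sdiff.2 ⟨hP.subset p hp hy, hyC⟩, by simp [hp, hy]⟩)
  calc #P ≤ _ := card_le_card hcover
    _ ≤ #(A \ C) * D + #C * t := (card_union_le _ _).trans <| add_le_add
      (card_biUnion_le_card_mul _ _ _ fun x _ => hP.degree_le x)
      (card_biUnion_le_card_mul _ _ _ fun x hx => hP.card_filter_mem_subset_le hQ hCQ (hC hx))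

/-- A family `𝓕` of containers for `H` within `A`: every independent set of `H` inside `A` lies in a
member of `𝓕`. -/
def IsContainerFamily (H : Finset (Finset E)) (A : Finset E) (𝓕 : Finset (Finset E)) : Prop :=
  ∀ I : Set E, I ⊆ A → IsIndependentIn H I → ∃ C ∈ 𝓕, I ⊆ (C : Set E)

theorem IsCappedFamily.mul_card_filter_subset_lowLinkVertices_le [Fintype E] {H : Finset (Finset E)}
    (hlin : IsLinearFamily H) (hne : ∀ h ∈ H, h.Nonempty) {q t : ℕ}
    (hdeg : ∀ x, #{h ∈ H | x ∈ h} ≤ (q * t) ^ 2) {A : Finset E} {P : Finset (Finset E)}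
    (hP : IsCappedFamily A 2 (q * t) P) (hsmall : q * #P ≤ 2 * (q * t) * Fintype.card E) :
    q * #{h ∈ H | h ⊆ lowLinkVertices H A (q * t) P (t * (q * t))} ≤
      7 * (q * t) ^ 2 * Fintype.card E := by
  set D := q * t with hD
  set W : Finset E := {x | D ≤ #{p ∈ P | x ∈ p}}
  have hWcard : #W * D ≤ 2 * #P := by
    calc #W * D ≤ ∑ p ∈ P, #(W ∩ p) := le_sum_card_inter fun x hx => (mem_filter.1 hx).2
      _ ≤ ∑ p ∈ P, #p := sum_le_sum fun p _ => card_le_card inter_subset_right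
      _ = 2 * #P := by rw [sum_const_nat fun p hp => hP.sized hp, mul_comm]
  have hedges := card_filter_subset_lowLinkVertices_le hlin hne one_lt_two hP.sized hdeg
    (W := W) (D := D) (fun x hx => by simpa [W] using hx) A (t * D)
  calc q * #{h ∈ H | h ⊆ lowLinkVertices H A D P (t * D)}
      ≤ q * (#P + #W * D ^ 2 + #A * (t * D)) := Nat.mul_le_mul_left q hedges
    _ = q * #P + q * (#W * D) * D + #A * D ^ 2 := by rw [hD]; ring
    _ ≤ q * #P + q * (2 * #P) * D + Fintype.card E * D ^ 2 := by
      gcongr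
      exact card_le_univ A
    _ = q * #P + 2 * (q * #P) * D + Fintype.card E * D ^ 2 := by ring
    _ ≤ 2 * D * Fintype.card E + 2 * (2 * D * Fintype.card E) * D + Fintype.card E * D ^ 2 := by
      gcongr
    _ = 2 * D * Fintype.card E + 5 * D ^ 2 * Fintype.card E := by ring
    _ ≤ 2 * D ^ 2 * Fintype.card E + 5 * D ^ 2 * Fintype.card E := by
      gcongr
      exact Nat.le_self_pow two_ne_zero D
    _ = 7 * D ^ 2 * Fintype.card E := by ring

theorem IsCappedFamily.exists_isContainerFamily [Fintype E] {A : Finset E} {D : ℕ}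
    {P : Finset (Finset E)} (hP : IsCappedFamily A 2 D P) {t m : ℕ} (ht : 0 < t)
    (hm : Fintype.card E ≤ t * m) :
    ∃ 𝓕 : Finset (Finset E), #𝓕 ≤ (Fintype.card E + 1) ^ m ∧
      (∀ C ∈ 𝓕, C ⊆ A ∧ #P ≤ #(A \ C) * D + #C * t) ∧ IsContainerFamily P A 𝓕 := by
  obtain ⟨𝓠, hcard, hcapped, hcover⟩ := exists_cappedFamilies
    (isLinearFamily_of_sized_two hP.sized) one_pos hP.sized A (D := 1) ht (by rwa [one_mul])
  refine ⟨𝓠.image fun Q => {x ∈ lowLinkVertices P A 1 Q t | {x} ∉ Q},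
    card_image_le.trans hcard, forall_mem_image.2 fun Q hQ => ⟨?_, ?_⟩, fun I hIA hI => ?_⟩
  · exact (filter_subset _ _).trans (filter_subset _ _)
  · exact hP.card_le_card_sdiff_mul_add (hcapped Q hQ).sized (filter_subset _ _)
      fun x hx => (mem_filter.1 hx).2
  · obtain ⟨Q, hQ, hIQ, hIlow⟩ := hcover I hIA hI
    refine ⟨_, mem_image_of_mem _ hQ, fun x hx => mem_filter.2 ⟨hIlow hx, fun hxQ => ?_⟩⟩
    exact hIQ _ hxQ (by simpa using hx)

theorem mul_card_add_card_le_mul_card [Fintype E] {A C : Finset E} {q t n : ℕ} (hCA : C ⊆ A)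
    (hlarge : 2 * (q * t) * Fintype.card E < q * n) (hn : n ≤ #(A \ C) * (q * t) + #C * t) :
    q * #C + Fintype.card E ≤ q * #A := by
  have hgain : q * t * (2 * Fintype.card E) < q * t * (q * #(A \ C) + Fintype.card E) := by
    calc q * t * (2 * Fintype.card E) = 2 * (q * t) * Fintype.card E := by ring
      _ < q * n := hlarge
      _ ≤ q * (#(A \ C) * (q * t) + #C * t) := Nat.mul_le_mul_left q hn
      _ = q * t * (q * #(A \ C) + #C) := by ring
      _ ≤ q * t * (q * #(A \ C) + Fintype.card E) := by
        gcongr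
        exact card_le_univ C
  have hgain' := lt_of_mul_lt_mul_left hgain (Nat.zero_le _)
  rw [← card_sdiff_add_card_eq_card hCA, mul_add]
  omega

theorem exists_isContainerFamily_step [Fintype E] {H : Finset (Finset E)} (hlin : IsLinearFamily H)
    (hH : (H : Set (Finset E)).Sized 3) {q t m : ℕ} (hq : 0 < q) (ht : 0 < t)
    (hdeg : ∀ x, #{h ∈ H | x ∈ h} ≤ (q * t) ^ 2) (hm : Fintype.card E ≤ t * m) (A : Finset E) :
    ∃ 𝓕 : Finset (Finset E), #𝓕 ≤ (Fintype.card E + 1) ^ (2 * m) ∧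
      (∀ C ∈ 𝓕, q * #{h ∈ H | h ⊆ C} ≤ 7 * (q * t) ^ 2 * Fintype.card E ∨
        q * #C + Fintype.card E ≤ q * #A) ∧ IsContainerFamily H A 𝓕 := by
  obtain ⟨𝓟, h𝓟card, h𝓟capped, h𝓟cover⟩ := exists_cappedFamilies hlin two_pos hH A (D := q * t)
    (g := t * (q * t)) (m := m) (by positivity) (by linarith [Nat.mul_le_mul_left (q * t) hm])
  have hcontainers (P) (hP : P ∈ 𝓟) : ∃ 𝓕 : Finset (Finset E), #𝓕 ≤ (Fintype.card E + 1) ^ m ∧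
      (∀ C ∈ 𝓕, q * #{h ∈ H | h ⊆ C} ≤ 7 * (q * t) ^ 2 * Fintype.card E ∨
        q * #C + Fintype.card E ≤ q * #A) ∧
      IsContainerFamily P (lowLinkVertices H A (q * t) P (t * (q * t))) 𝓕 := by
    by_cases hsmall : q * #P ≤ 2 * (q * t) * Fintype.card E
    · refine ⟨{lowLinkVertices H A (q * t) P (t * (q * t))},
        by simpa using Nat.one_le_pow _ _ (by simp), ?_,
        fun I hI _ => ⟨_, mem_singleton_self _, hI⟩⟩
      simpa only [mem_singleton, forall_eq] using
        Or.inl ((h𝓟capped P hP).mul_card_filter_subset_lowLinkVertices_le hlin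
          (fun h hh => card_pos.1 (by simp [hH hh])) hdeg hsmall)
    · obtain ⟨𝓕, hcard, h𝓕, hcover⟩ := (h𝓟capped P hP).exists_isContainerFamily ht hm
      exact ⟨𝓕, hcard, fun C hC => .inr <|
        mul_card_add_card_le_mul_card (h𝓕 C hC).1 (lt_of_not_ge hsmall) (h𝓕 C hC).2,
        fun I hI => hcover I (hI.trans (filter_subset _ _))⟩
  choose! 𝓕 hcard h𝓕 hcover using hcontainers
  refine ⟨𝓟.biUnion 𝓕, ?_, fun C hC => ?_, fun I hIA hI => ?_⟩
  · rw [two_mul, pow_add]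
    exact (card_biUnion_le_card_mul _ _ _ hcard).trans (Nat.mul_le_mul_right _ h𝓟card)
  · obtain ⟨P, hP, hCP⟩ := mem_biUnion.1 hC
    exact h𝓕 P hP C hCP
  · obtain ⟨P, hP, hIP, hIlow⟩ := h𝓟cover I hIA hI
    obtain ⟨C, hC, hIC⟩ := hcover P hP I hIlow hIP
    exact ⟨C, mem_biUnion.2 ⟨P, hP, hC⟩, hIC⟩

-- Every split that is not final discards a proportion `1 / q` of the vertices, so the
-- recursion stops after `q` rounds when started from the whole vertex set.
theorem exists_isContainerFamily [Fintype E] {H : Finset (Finset E)} (hlin : IsLinearFamily H)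
    (hH : (H : Set (Finset E)).Sized 3) {q t m : ℕ} (hq : 0 < q) (ht : 0 < t)
    (hdeg : ∀ x, #{h ∈ H | x ∈ h} ≤ (q * t) ^ 2) (hm : Fintype.card E ≤ t * m) (s : ℕ)
    (A : Finset E) (hA : q * #A ≤ s * Fintype.card E) :
    ∃ 𝓕 : Finset (Finset E), #𝓕 ≤ (Fintype.card E + 1) ^ (2 * m * s) ∧
      (∀ C ∈ 𝓕, q * #{h ∈ H | h ⊆ C} ≤ 7 * (q * t) ^ 2 * Fintype.card E) ∧
      IsContainerFamily H A 𝓕 := by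
  have singleton_works (B : Finset E) (k : ℕ)
      (hB : q * #{h ∈ H | h ⊆ B} ≤ 7 * (q * t) ^ 2 * Fintype.card E) :
      ∃ 𝓕 : Finset (Finset E), #𝓕 ≤ (Fintype.card E + 1) ^ k ∧
        (∀ C ∈ 𝓕, q * #{h ∈ H | h ⊆ C} ≤ 7 * (q * t) ^ 2 * Fintype.card E) ∧
        IsContainerFamily H B 𝓕 :=
    ⟨{B}, by simpa using Nat.one_le_pow _ _ (by simp), by simpa using hB,
      fun I hI _ => ⟨B, mem_singleton_self B, hI⟩⟩
  induction s generalizing A with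
  | zero =>
    have hA0 : A = ∅ := by simpa [hq.ne'] using hA
    refine singleton_works A _ ?_
    have hnone : {h ∈ H | h ⊆ A} = ∅ := filter_eq_empty_iff.2 fun h hh hhA => by
      have h3 := hH hh
      simp [subset_empty.1 (hhA.trans_eq hA0)] at h3
    simp [hnone]
  | succ s ih =>
    obtain ⟨𝓖, hcard, h𝓖, hcover⟩ := exists_isContainerFamily_step hlin hH hq ht hdeg hm A
    have hrec (B) (hB : B ∈ 𝓖) := (h𝓖 B hB).elim (singleton_works B (2 * m * s)) fun hshrink =>
      ih B (by rw [add_one_mul] at hA; omega)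
    choose! 𝓕 h𝓕card h𝓕 h𝓕cover using hrec
    refine ⟨𝓖.biUnion 𝓕, ?_, fun C hC => ?_, fun I hIA hI => ?_⟩
    · rw [mul_add_one, add_comm (2 * m * s), pow_add]
      exact (card_biUnion_le_card_mul _ _ _ h𝓕card).trans (Nat.mul_le_mul_right _ hcard)
    · obtain ⟨B, hB, hCB⟩ := mem_biUnion.1 hC
      exact h𝓕 B hB C hCB
    · obtain ⟨B, hB, hIB⟩ := hcover I hIA hI
      obtain ⟨C, hC, hIC⟩ := h𝓕cover B hB I hIB hI
      exact ⟨C, mem_biUnion.2 ⟨B, hB, hC⟩, hIC⟩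

end Containers

section Goodman

variable {V : Type*} [Fintype V] [DecidableEq V] (G : SimpleGraph V) [DecidableRel G.Adj]

theorem sum_card_commonNeighbors_le_two_mul_card_cliques (v : V) :
    ∑ w ∈ G.neighborFinset v, #(G.neighborFinset v ∩ G.neighborFinset w) ≤
      2 * #{s ∈ G.cliqueFinset 3 | v ∈ s} := by
  rw [← card_sigma]
  refine card_le_mul_card_image_of_maps_to (f := fun p => {v, p.1, p.2}) (fun p hp => ?_) 2
    fun s hs => ?_
  · simp only [mem_sigma, mem_inter, SimpleGraph.mem_neighborFinset] at hp
    simp [SimpleGraph.mem_cliqueFinset_iff, SimpleGraph.is3Clique_triple_iff, hp]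
  · obtain ⟨hs, hvs⟩ := mem_filter.1 hs
    have hpairs : #(s.erase v).offDiag = 2 := by
      rw [offDiag_card, card_erase_of_mem hvs, (G.mem_cliqueFinset_iff.1 hs).card_eq]
    rw [← hpairs]
    refine card_le_card_of_injOn (fun p => (p.1, p.2)) (fun p hp => ?_) (fun p _ p' _ h => ?_)
    · obtain ⟨hpS, rfl⟩ := mem_filter.1 (mem_coe.1 hp)
      simp only [mem_sigma, mem_inter, SimpleGraph.mem_neighborFinset] at hpS
      simp [hpS.1.ne', hpS.2.1.ne', hpS.2.2.ne]
    · simpa [Sigma.ext_iff] using h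

theorem sum_sum_card_commonNeighbors_le_six_mul_card_cliques :
    ∑ v, ∑ w ∈ G.neighborFinset v, #(G.neighborFinset v ∩ G.neighborFinset w) ≤
      6 * #(G.cliqueFinset 3) := by
  calc _ ≤ ∑ v, 2 * #{s ∈ G.cliqueFinset 3 | v ∈ s} :=
        sum_le_sum fun v _ => sum_card_commonNeighbors_le_two_mul_card_cliques G v
    _ = 2 * ∑ s ∈ G.cliqueFinset 3, #{v | v ∈ s} := by
      rw [← mul_sum]
      exact congrArg _ (sum_card_bipartiteAbove_eq_sum_card_bipartiteBelow (· ∈ ·))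
    _ = 6 * #(G.cliqueFinset 3) := by
      rw [sum_const_nat fun s hs => by simpa using (G.mem_cliqueFinset_iff.1 hs).card_eq]
      ring

omit [DecidableEq V] in
theorem sum_sum_degree_add_degree_eq :
    ∑ v, ∑ w ∈ G.neighborFinset v, (G.degree v + G.degree w) = 2 * ∑ v, G.degree v ^ 2 := by
  have hswap : ∑ v, ∑ w ∈ G.neighborFinset v, G.degree w =
      ∑ v, ∑ _w ∈ G.neighborFinset v, G.degree v :=
    sum_comm' fun v _ => by simp [G.adj_comm]
  simp only [sum_add_distrib, hswap, sum_const, SimpleGraph.card_neighborFinset_eq_degree,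
    smul_eq_mul, ← sq, two_mul]

theorem four_mul_card_edgeFinset_sq_le :
    4 * #G.edgeFinset ^ 2 ≤
      Fintype.card V * (Fintype.card V * #G.edgeFinset + 3 * #(G.cliqueFinset 3)) := by
  have hcauchy : (2 * #G.edgeFinset) ^ 2 ≤ Fintype.card V * ∑ v, G.degree v ^ 2 := by
    rw [← G.sum_degrees_eq_twice_card_edges]
    exact sq_sum_le_card_mul_sum_sq
  have hdegrees : ∑ v, ∑ w ∈ G.neighborFinset v, (G.degree v + G.degree w) ≤
      ∑ v, ∑ w ∈ G.neighborFinset v,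
        (Fintype.card V + #(G.neighborFinset v ∩ G.neighborFinset w)) := by
    refine sum_le_sum fun v _ => sum_le_sum fun w _ => ?_
    rw [← G.card_neighborFinset_eq_degree v, ← G.card_neighborFinset_eq_degree w,
      ← card_union_add_card_inter]
    gcongr
    exact card_le_univ _
  have hedges : ∑ v, ∑ _w ∈ G.neighborFinset v, Fintype.card V =
      2 * (Fintype.card V * #G.edgeFinset) := by
    simp only [sum_const, smul_eq_mul, ← sum_mul, G.card_neighborFinset_eq_degree,
      G.sum_degrees_eq_twice_card_edges]
    ring
  have htriangles := sum_sum_card_commonNeighbors_le_six_mul_card_cliques G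
  rw [sum_sum_degree_add_degree_eq] at hdegrees
  simp only [sum_add_distrib] at hdegrees
  rw [hedges] at hdegrees
  calc 4 * #G.edgeFinset ^ 2 = (2 * #G.edgeFinset) ^ 2 := by ring
    _ ≤ Fintype.card V * ∑ v, G.degree v ^ 2 := hcauchy
    _ ≤ _ := by
      gcongr
      omega

theorem card_edgeFinset_le_of_card_cliques_le {γ : ℝ} (hγ : 0 ≤ γ)
    (hG : (#(G.cliqueFinset 3) : ℝ) ≤ γ * Fintype.card V ^ 3) :
    (#G.edgeFinset : ℝ) ≤ (1 / 4 + 3 * γ) * Fintype.card V ^ 2 := by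
  have hgoodman : (4 : ℝ) * #G.edgeFinset ^ 2 ≤
      Fintype.card V * (Fintype.card V * #G.edgeFinset + 3 * #(G.cliqueFinset 3)) := by
    exact_mod_cast four_mul_card_edgeFinset_sq_le G
  set n : ℝ := (Fintype.card V : ℝ)
  set m : ℝ := (#G.edgeFinset : ℝ)
  have hn : 0 ≤ n := Nat.cast_nonneg _
  have hm : m * (4 * m - n ^ 2) ≤ 3 * γ * n ^ 4 := by nlinarith
  by_contra! hlt
  have hquarter : n ^ 2 / 4 ≤ m := by nlinarith
  nlinarith [mul_nonneg hγ (sq_nonneg n)]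

end Goodman

section Triangles

variable {V : Type*} [DecidableEq V]

/-- The edges of the complete graph on the vertex set `s`. -/
def completeEdges (s : Finset V) : Finset (Sym2 V) :=
  {e ∈ s.sym2 | ¬ e.IsDiag}

variable (V) in
/-- The hypergraph of triangles: its vertices are the pairs of points of `V`, and its edges are the
edge sets of the triangles on `V`. -/
def triangleFamily [Fintype V] : Finset (Finset (Sym2 V)) :=
  (powersetCard 3 univ).image completeEdges

theorem card_completeEdges (s : Finset V) : #(completeEdges s) = (#s).choose 2 := by
  rw [← Sym2.card_image_offDiag]
  congr 1
  ext e
  induction e with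
  | _ a b =>
    simp only [completeEdges, mem_filter, mk_mem_sym2_iff, Sym2.mk_isDiag_iff, mem_image,
      mem_offDiag, Prod.exists, Function.uncurry_apply_pair]
    constructor
    · rintro ⟨⟨ha, hb⟩, hab⟩
      exact ⟨a, b, ⟨ha, hb, hab⟩, rfl⟩
    · rintro ⟨x, y, ⟨hx, hy, hxy⟩, h⟩
      aesop

theorem completeEdges_inter (s t : Finset V) :
    completeEdges s ∩ completeEdges t = completeEdges (s ∩ t) := by
  ext e
  simp only [completeEdges, mem_inter, mem_filter, mem_sym2_iff, forall_and]
  tauto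

theorem card_completeEdges_inter_le_one {s t : Finset V} (hs : #s = 3) (ht : #t = 3)
    (hst : s ≠ t) : #(completeEdges s ∩ completeEdges t) ≤ 1 := by
  have hlt : #(s ∩ t) < #s := card_lt_card <| inter_subset_left.ssubset_of_ne fun h =>
    hst (eq_of_subset_of_card_le (inter_eq_left.1 h) (by rw [hs, ht]))
  rw [completeEdges_inter, card_completeEdges]
  exact Nat.choose_le_choose (a := #(s ∩ t)) (b := 2) 2 (by omega)

theorem coe_completeEdges_subset_edgeSet {G : SimpleGraph V} {s : Finset V} :
    (completeEdges s : Set (Sym2 V)) ⊆ G.edgeSet ↔ G.IsClique s := by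
  simp only [Set.subset_def, Sym2.forall, completeEdges, mem_coe, mem_filter, mk_mem_sym2_iff,
    Sym2.mk_isDiag_iff, SimpleGraph.mem_edgeSet, SimpleGraph.isClique_iff, Set.Pairwise]
  exact ⟨fun h a ha b hb hab => h a b ⟨⟨ha, hb⟩, hab⟩, fun h a b hab => h hab.1.1 hab.1.2 hab.2⟩

theorem completeEdges_injOn : Set.InjOn completeEdges {s : Finset V | #s = 3} := by
  intro s hs t ht hst
  by_contra hne
  have hle := card_completeEdges_inter_le_one hs ht hne
  rw [← hst, inter_self, card_completeEdges, hs] at hle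
  exact absurd hle (by decide)

variable [Fintype V]

theorem triangleFamily_sized : (triangleFamily V : Set (Finset (Sym2 V))).Sized 3 := by
  intro h hh
  obtain ⟨s, hs, rfl⟩ := mem_image.1 (mem_coe.1 hh)
  rw [card_completeEdges, (mem_powersetCard.1 hs).2]
  rfl

theorem card_triangleFamily_filter_mem_le (e : Sym2 V) :
    #{h ∈ triangleFamily V | e ∈ h} ≤ Fintype.card V := by
  induction e with
  | _ a b =>
    refine (card_le_card (t := univ.image fun c => completeEdges {a, b, c}) fun h hh => ?_).trans
      card_image_le
    obtain ⟨hh, habh⟩ := mem_filter.1 hh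
    obtain ⟨s, hs, rfl⟩ := mem_image.1 hh
    simp only [completeEdges, mem_filter, mk_mem_sym2_iff, Sym2.mk_isDiag_iff] at habh
    obtain ⟨⟨ha, hb⟩, hab⟩ := habh
    obtain ⟨c, hc⟩ := card_eq_one.1 (show #((s.erase a).erase b) = 1 by
      rw [card_erase_of_mem (mem_erase.2 ⟨Ne.symm hab, hb⟩), card_erase_of_mem ha,
        (mem_powersetCard.1 hs).2])
    refine mem_image.2 ⟨c, mem_univ c, ?_⟩
    rw [← hc, insert_erase (mem_erase.2 ⟨Ne.symm hab, hb⟩), insert_erase ha]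

theorem isLinearFamily_triangleFamily : IsLinearFamily (triangleFamily V) := by
  intro h hh h' hh' hne
  obtain ⟨s, hs, rfl⟩ := mem_image.1 (mem_coe.1 hh)
  obtain ⟨t, ht, rfl⟩ := mem_image.1 (mem_coe.1 hh')
  exact card_completeEdges_inter_le_one (mem_powersetCard.1 hs).2 (mem_powersetCard.1 ht).2
    fun hst => hne (congrArg completeEdges hst)

theorem isIndependentIn_edgeSet_of_cliqueFree {G : SimpleGraph V} (hG : G.CliqueFree 3) :
    IsIndependentIn (triangleFamily V) G.edgeSet := by
  intro h hh hhG
  obtain ⟨s, hs, rfl⟩ := mem_image.1 hh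
  exact hG s ⟨coe_completeEdges_subset_edgeSet.1 hhG, (mem_powersetCard.1 hs).2⟩

theorem card_cliqueFinset_fromEdgeSet_le (C : Finset (Sym2 V))
    [DecidableRel (SimpleGraph.fromEdgeSet (C : Set (Sym2 V))).Adj] :
    #((SimpleGraph.fromEdgeSet (C : Set (Sym2 V))).cliqueFinset 3) ≤
      #{h ∈ triangleFamily V | h ⊆ C} := by
  refine card_le_card_of_injOn completeEdges (fun s hs => ?_) (completeEdges_injOn.mono ?_)
  · have hs' := SimpleGraph.mem_cliqueFinset_iff.1 (mem_coe.1 hs)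
    refine mem_coe.2 (mem_filter.2 ⟨mem_image_of_mem _ ?_, ?_⟩)
    · exact mem_powersetCard.2 ⟨subset_univ s, hs'.card_eq⟩
    · rw [← coe_subset]
      refine (coe_completeEdges_subset_edgeSet.2 hs'.isClique).trans ?_
      rw [SimpleGraph.edgeSet_fromEdgeSet]
      exact Set.sdiff_subset
  · exact fun s hs => (SimpleGraph.mem_cliqueFinset_iff.1 (mem_coe.1 hs)).card_eq

theorem ncard_edgeSet_fromEdgeSet_le {q : ℕ} (hq : 0 < q) (C : Finset (Sym2 V))
    (hC : q * #{h ∈ triangleFamily V | h ⊆ C} ≤ 7 * Fintype.card V ^ 3) :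
    ((SimpleGraph.fromEdgeSet (C : Set (Sym2 V))).edgeSet.ncard : ℝ) ≤
      (1 / 4 + 21 / q) * Fintype.card V ^ 2 := by
  classical
  have hcliques : (#((SimpleGraph.fromEdgeSet (C : Set (Sym2 V))).cliqueFinset 3) : ℝ) ≤
      7 / q * Fintype.card V ^ 3 := by
    rw [div_mul_eq_mul_div, le_div_iff₀ (by exact_mod_cast hq), mul_comm]
    exact_mod_cast (Nat.mul_le_mul_left q (card_cliqueFinset_fromEdgeSet_le C)).trans hC
  have hedges := card_edgeFinset_le_of_card_cliques_le _ (by positivity) hcliques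
  rw [← Set.ncard_coe_finset, SimpleGraph.coe_edgeFinset] at hedges
  exact hedges.trans_eq (by ring)

omit [DecidableEq V] in
theorem exists_triangleFree_containers {q t : ℕ} (hq : 0 < q) (ht : 0 < t)
    (hV : Fintype.card V = (q * t) ^ 2) :
    ∃ 𝓖 : Finset (SimpleGraph V), #𝓖 ≤ ((q * t) ^ 4 + 1) ^ (2 * q ^ 2 * (q * t) ^ 3) ∧
      (∀ G ∈ 𝓖, (G.edgeSet.ncard : ℝ) ≤ (1 / 4 + 21 / q) * Fintype.card V ^ 2) ∧
      ∀ G : SimpleGraph V, G.CliqueFree 3 → ∃ G' ∈ 𝓖, G ≤ G' := by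
  classical
  have hpairs : Fintype.card (Sym2 V) ≤ (q * t) ^ 4 := by
    calc Fintype.card (Sym2 V) ≤ Fintype.card (V × V) :=
          Fintype.card_le_of_surjective _ Sym2.mk_surjective
      _ = (q * t) ^ 4 := by rw [Fintype.card_prod, hV, ← sq, ← pow_mul]
  obtain ⟨𝓕, hcard, h𝓕, hcover⟩ := exists_isContainerFamily isLinearFamily_triangleFamily
    triangleFamily_sized hq ht (m := q * (q * t) ^ 3)
    (fun e => hV ▸ card_triangleFamily_filter_mem_le e) (hpairs.trans_eq (by ring)) q univ (by simp)
  refine ⟨𝓕.image fun C : Finset (Sym2 V) => .fromEdgeSet (C : Set (Sym2 V)), ?_, ?_,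
    fun G hG => ?_⟩
  · calc _ ≤ (Fintype.card (Sym2 V) + 1) ^ (2 * (q * (q * t) ^ 3) * q) := card_image_le.trans hcard
      _ ≤ ((q * t) ^ 4 + 1) ^ (2 * (q * (q * t) ^ 3) * q) := by gcongr
      _ = _ := by ring
  · refine forall_mem_image.2 fun C hC => ncard_edgeSet_fromEdgeSet_le hq C ?_
    calc _ ≤ 7 * (q * t) ^ 2 * Fintype.card (Sym2 V) := h𝓕 C hC
      _ ≤ 7 * (q * t) ^ 2 * (q * t) ^ 4 := by gcongr
      _ = 7 * Fintype.card V ^ 3 := by rw [hV]; ring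
  · obtain ⟨C, hC, hGC⟩ := hcover G.edgeSet (by simp) (isIndependentIn_edgeSet_of_cliqueFree hG)
    exact ⟨_, mem_image_of_mem _ hC, by simpa using SimpleGraph.fromEdgeSet_mono hGC⟩

end Triangles

section Lists

theorem card_powersetCard_filter_not_disjoint {K : Type*} [Fintype K] [DecidableEq K]
    (k : ℕ) (s : Finset K) :
    #{T ∈ powersetCard k univ | ¬ Disjoint T s} =
      (Fintype.card K).choose k - (Fintype.card K - #s).choose k := by
  have hdisj : {T ∈ powersetCard k (univ : Finset K) | Disjoint T s} = powersetCard k sᶜ := by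
    ext T
    simp [mem_powersetCard, subset_compl_iff_disjoint_right, and_comm]
  have hsplit := card_filter_add_card_filter_not (s := powersetCard k (univ : Finset K))
    (fun T => Disjoint T s)
  rw [hdisj, card_powersetCard, card_powersetCard, card_univ, card_compl] at hsplit
  omega

-- The union bound for independent uniformly random lists, phrased as a count.
theorem exists_lists_of_sum_prod_lt {E K : Type*} [Fintype E] [Fintype K]
    (𝓢 : Finset (E → Finset K)) (k : ℕ)
    (h : ∑ S ∈ 𝓢, ∏ e, ((Fintype.card K).choose k - (Fintype.card K - #(S e)).choose k) <
      (Fintype.card K).choose k ^ Fintype.card E) :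
    ∃ L : E → Finset K, (∀ e, #(L e) = k) ∧ ∀ S ∈ 𝓢, ∃ e, Disjoint (L e) (S e) := by
  classical
  set bad : Finset (E → Finset K) :=
    𝓢.biUnion fun S => Fintype.piFinset fun e => {T ∈ powersetCard k univ | ¬ Disjoint T (S e)}
  have hbad : #bad < #(Fintype.piFinset fun _ : E => powersetCard k (univ : Finset K)) := by
    refine card_biUnion_le.trans_lt ?_
    simpa only [Fintype.card_piFinset, card_powersetCard_filter_not_disjoint, card_powersetCard,
      card_univ, prod_const] using h
  obtain ⟨L, hL, hLbad⟩ := exists_mem_notMem_of_card_lt_card hbad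
  have hLk := Fintype.mem_piFinset.1 hL
  refine ⟨L, fun e => (mem_powersetCard.1 (hLk e)).2, fun S hS => ?_⟩
  by_contra! hhit
  exact hLbad (mem_biUnion.2 ⟨S, hS, Fintype.mem_piFinset.2 fun e =>
    mem_filter.2 ⟨hLk e, hhit e⟩⟩)

theorem pow_le_choose_div_choose {M k : ℕ} (hk : k ≤ M) (a : ℕ) :
    ((a + 1 - k : ℕ) / M : ℝ) ^ k ≤ a.choose k / M.choose k := by
  have hnum : (((a + 1 - k) ^ k : ℕ) : ℝ) ≤ k.factorial * a.choose k := by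
    exact_mod_cast (Nat.pow_sub_le_descFactorial a k).trans_eq
      (Nat.descFactorial_eq_factorial_mul_choose a k)
  have hden : (k.factorial * M.choose k : ℝ) ≤ (M ^ k : ℕ) := by
    exact_mod_cast (Nat.descFactorial_eq_factorial_mul_choose M k).symm.trans_le
      (Nat.descFactorial_le_pow M k)
  have hchoose : (0 : ℝ) < M.choose k := by exact_mod_cast Nat.choose_pos hk
  have hfact : (0 : ℝ) < k.factorial := by exact_mod_cast k.factorial_pos
  calc ((a + 1 - k : ℕ) / M : ℝ) ^ k = ((a + 1 - k) ^ k : ℕ) / (M ^ k : ℕ) := by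
        push_cast
        rw [div_pow]
    _ ≤ (k.factorial * a.choose k) / (k.factorial * M.choose k) :=
      div_le_div₀ (by positivity) hnum (by positivity) hden
    _ = a.choose k / M.choose k := mul_div_mul_left _ _ hfact.ne'

theorem card_mul_pow_le_sum_choose_div_choose {E : Type*} [Fintype E] {M k : ℕ} (hk : k ≤ M)
    (hM : 0 < M) (s : E → ℕ) {β : ℝ} (hβ : 0 ≤ β)
    (hs : ∑ e, (s e : ℝ) ≤ Fintype.card E * (M - k - β * M)) :
    Fintype.card E * β ^ k ≤ ∑ e, ((M - s e).choose k / M.choose k : ℝ) := by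
  have hMpos : (0 : ℝ) < M := by exact_mod_cast hM
  set x : E → ℝ := fun e => (M - s e + 1 - k : ℕ) / M
  have hx : Fintype.card E * β ≤ ∑ e, x e := by
    rw [← sum_div, le_div_iff₀ hMpos]
    calc Fintype.card E * β * M ≤ ∑ e, ((M : ℝ) - k - s e) := by
          rw [sum_sub_distrib, sum_const, card_univ, nsmul_eq_mul]
          linarith
      _ ≤ _ := sum_le_sum fun e _ => by
        rw [sub_sub, sub_le_iff_le_add]
        exact_mod_cast (by omega : M ≤ M - s e + 1 - k + (k + s e))
  have hpow : Fintype.card E * β ^ k ≤ ∑ e, x e ^ k := by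
    obtain _ | k := k
    · simp
    obtain hE | hE := isEmpty_or_nonempty E
    · simp
    have hEpos : (0 : ℝ) < Fintype.card E := by exact_mod_cast Fintype.card_pos
    calc Fintype.card E * β ^ (k + 1) = (Fintype.card E * β) ^ (k + 1) / Fintype.card E ^ k := by
          rw [eq_div_iff (pow_pos hEpos k).ne']
          ring
      _ ≤ (∑ e, x e) ^ (k + 1) / Fintype.card E ^ k := by gcongr
      _ ≤ ∑ e, x e ^ (k + 1) :=
        pow_sum_div_card_le_sum_pow (s := univ) (fun e _ => by positivity) k
  exact hpow.trans (sum_le_sum fun e _ => pow_le_choose_div_choose hk _)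

theorem exists_lists_forall_exists_disjoint {E K : Type*} [Fintype E] [Fintype K] [Nonempty K]
    {k : ℕ} (hk : k ≤ Fintype.card K) {β : ℝ} (hβ : 0 ≤ β) (𝓢 : Finset (E → Finset K))
    (hS : ∀ S ∈ 𝓢, ∑ e, (#(S e) : ℝ) ≤
      Fintype.card E * (Fintype.card K - k - β * Fintype.card K))
    (h𝓢 : #𝓢 * Real.exp (-(Fintype.card E * β ^ k)) < 1) :
    ∃ L : E → Finset K, (∀ e, #(L e) = k) ∧ ∀ S ∈ 𝓢, ∃ e, Disjoint (L e) (S e) := by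
  apply exists_lists_of_sum_prod_lt
  have hchoose : (0 : ℝ) < (Fintype.card K).choose k := by exact_mod_cast Nat.choose_pos hk
  have hprod (S) (hS' : S ∈ 𝓢) :
      ∏ e, ((Fintype.card K).choose k - (Fintype.card K - #(S e)).choose k : ℝ) ≤
        (Fintype.card K).choose k ^ Fintype.card E * Real.exp (-(Fintype.card E * β ^ k)) := by
    calc _ ≤ ∏ e, ((Fintype.card K).choose k * Real.exp
          (-((Fintype.card K - #(S e)).choose k / (Fintype.card K).choose k))) := by
          refine prod_le_prod (fun e _ => ?_) fun e _ => ?_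
          · exact sub_nonneg.2 (by exact_mod_cast Nat.choose_le_choose k (Nat.sub_le _ _))
          · have hexp := mul_le_mul_of_nonneg_left (Real.add_one_le_exp
              (-((Fintype.card K - #(S e)).choose k / (Fintype.card K).choose k : ℝ))) hchoose.le
            rwa [mul_add, mul_neg, mul_div_cancel₀ _ hchoose.ne', mul_one, neg_add_eq_sub] at hexp
      _ = (Fintype.card K).choose k ^ Fintype.card E * Real.exp
          (-∑ e, ((Fintype.card K - #(S e)).choose k / (Fintype.card K).choose k : ℝ)) := by
        rw [prod_mul_distrib, prod_const, card_univ, ← Real.exp_sum, sum_neg_distrib]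
      _ ≤ _ := by
        gcongr
        exact card_mul_pow_le_sum_choose_div_choose hk Fintype.card_pos _ hβ (hS S hS')
  rw [← Nat.cast_lt (α := ℝ)]
  push_cast [Nat.cast_sub (Nat.choose_le_choose k (Nat.sub_le (Fintype.card K) _))]
  calc _ ≤ ∑ _S ∈ 𝓢, (Fintype.card K).choose k ^ Fintype.card E *
        Real.exp (-(Fintype.card E * β ^ k)) := sum_le_sum hprod
    _ = (Fintype.card K).choose k ^ Fintype.card E *
        (#𝓢 * Real.exp (-(Fintype.card E * β ^ k))) := by
      rw [sum_const, nsmul_eq_mul]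
      ring
    _ < _ := mul_lt_of_lt_one_right (by positivity) h𝓢

end Lists

theorem hasMonoCopy_of_isContained_fromEdgeSet {α β : Type*} {G : SimpleGraph α} {n : ℕ}
    {c : Sym2 (Fin n) → β} {x : β} (h : G.IsContained (SimpleGraph.fromEdgeSet (c ⁻¹' {x}))) :
    HasMonoCopy G c := by
  obtain ⟨f⟩ := h
  refine ⟨f, x, f.injective, fun a b hab => ?_⟩
  exact ((SimpleGraph.fromEdgeSet_adj _).1 (f.toHom.map_adj hab)).1

theorem listRamsey_le_of_lists {α : Type*} {G : SimpleGraph α} {n k M : ℕ}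
    (L : {e : Sym2 (Fin n) // ¬ e.IsDiag} → Finset (Fin M)) (hL : ∀ e, #(L e) = k)
    (hcover : ∀ H : Fin M → SimpleGraph (Fin n), (∀ i, G.Free (H i)) →
      ∃ e, ∀ i ∈ L e, e.1 ∉ (H i).edgeSet) :
    listRamsey G k ≤ n := by
  refine Nat.sInf_le ⟨fun e => if h : e.IsDiag then ∅ else (L ⟨e, h⟩).map Fin.valEmbedding,
    fun e he => by simp [he, hL], fun c hc => ?_⟩
  by_contra hmono
  obtain ⟨e, he⟩ := hcover (fun i => .fromEdgeSet (c ⁻¹' {(i : ℕ)}))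
    fun i hi => hmono (hasMonoCopy_of_isContained_fromEdgeSet hi)
  have hce := hc e e.2
  simp only [e.2, dite_false, mem_map, Fin.valEmbedding_apply] at hce
  obtain ⟨i, hi, hie⟩ := hce
  exact he i hi (by simpa [e.2] using hie.symm)

/-- The indices `i` for which the pair `e` is an edge of `A i`. -/
noncomputable def edgeIndices {ι V : Type*} [Fintype ι] (A : ι → SimpleGraph V) (e : Sym2 V) :
    Finset ι :=
  open Classical in {i | e ∈ (A i).edgeSet}

theorem mem_edgeIndices {ι V : Type*} [Fintype ι] {A : ι → SimpleGraph V} {e : Sym2 V} {i : ι} :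
    i ∈ edgeIndices A e ↔ e ∈ (A i).edgeSet := by
  simp [edgeIndices]

theorem sum_card_edgeIndices {ι V : Type*} [Fintype ι] [Fintype V] [DecidableEq V]
    (A : ι → SimpleGraph V) :
    ∑ e : {e : Sym2 V // ¬ e.IsDiag}, #(edgeIndices A e) = ∑ i, (A i).edgeSet.ncard := by
  classical
  calc _ = ∑ i, #{e : {e : Sym2 V // ¬ e.IsDiag} | e.1 ∈ (A i).edgeSet} := by
        simp only [edgeIndices, card_filter]
        exact sum_comm
    _ = _ := sum_congr rfl fun i _ => by
      rw [← Set.ncard_coe_finset, ← Set.ncard_image_of_injective _ Subtype.val_injective]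
      congr 1
      ext e
      simpa using fun he => (A i).not_isDiag_of_mem_edgeSet he

theorem listRamsey_le_of_containers {α : Type*} {G : SimpleGraph α} {n k M : ℕ} (hM : 0 < M)
    (hk : k ≤ M) {β : ℝ} (hβ : 0 ≤ β) (𝓖 : Finset (SimpleGraph (Fin n)))
    (hsize : ∀ H ∈ 𝓖, (H.edgeSet.ncard : ℝ) * M ≤ n.choose 2 * (M - k - β * M))
    (hcover : ∀ H : SimpleGraph (Fin n), G.Free H → ∃ H' ∈ 𝓖, H ≤ H')
    (hcard : (#𝓖 : ℝ) ^ M * Real.exp (-(n.choose 2 * β ^ k)) < 1) :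
    listRamsey G k ≤ n := by
  classical
  have : NeZero M := ⟨hM.ne'⟩
  set palettes : (Fin M → SimpleGraph (Fin n)) → {e : Sym2 (Fin n) // ¬ e.IsDiag} →
    Finset (Fin M) := fun A e => edgeIndices A e
  have hpairs : Fintype.card {e : Sym2 (Fin n) // ¬ e.IsDiag} = n.choose 2 := by
    rw [Sym2.card_subtype_not_diag, Fintype.card_fin]
  have hpalettes (S) (hS : S ∈ (Fintype.piFinset fun _ : Fin M => 𝓖).image palettes) :
      ∑ e, (#(S e) : ℝ) ≤ n.choose 2 * (M - k - β * M) := by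
    obtain ⟨A, hA, rfl⟩ := mem_image.1 hS
    refine le_of_mul_le_mul_right ?_ (show (0 : ℝ) < M by exact_mod_cast hM)
    calc (∑ e, (#(palettes A e) : ℝ)) * M = ∑ i, ((A i).edgeSet.ncard : ℝ) * M := by
          rw [← sum_mul]
          exact_mod_cast congrArg (· * M) (sum_card_edgeIndices A)
      _ ≤ ∑ _i : Fin M, n.choose 2 * (M - k - β * M : ℝ) :=
        sum_le_sum fun i _ => hsize (A i) (Fintype.mem_piFinset.1 hA i)
      _ = _ := by
        rw [sum_const, card_univ, Fintype.card_fin, nsmul_eq_mul]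
        ring
  have hfew : #((Fintype.piFinset fun _ : Fin M => 𝓖).image palettes) *
      Real.exp (-(n.choose 2 * β ^ k)) < 1 := by
    refine lt_of_le_of_lt ?_ hcard
    gcongr
    exact_mod_cast card_image_le.trans_eq (by simp)
  obtain ⟨L, hL, hdisj⟩ := exists_lists_forall_exists_disjoint (K := Fin M) (k := k)
    (by simpa using hk) hβ ((Fintype.piFinset fun _ => 𝓖).image palettes)
    (by simpa only [hpairs, Fintype.card_fin] using hpalettes) (by rwa [hpairs])
  refine listRamsey_le_of_lists L hL fun H hH => ?_
  choose A hA hHA using fun i => hcover (H i) (hH i)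
  obtain ⟨e, he⟩ := hdisj _ (mem_image_of_mem palettes (Fintype.mem_piFinset.2 hA))
  exact ⟨e, fun i hi heH => disjoint_left.1 he hi
    (mem_edgeIndices.2 (SimpleGraph.edgeSet_mono (hHA i) heH))⟩

theorem pow_four_div_four_le_choose_two {D : ℕ} (hD : 2 ≤ D) :
    (D ^ 4 / 4 : ℝ) ≤ (D ^ 2).choose 2 := by
  have hD' : (2 : ℝ) ≤ D := by exact_mod_cast hD
  rw [Nat.cast_choose_two]
  push_cast
  nlinarith [sq_nonneg ((D : ℝ) ^ 2), mul_self_le_mul_self zero_le_two hD']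

theorem mul_exp_neg_lt_one_of_le_pow {x y b : ℝ} {m : ℕ} (hb : 0 < b) (hx : x ≤ b ^ m)
    (hy : m * Real.log b < y) : x * Real.exp (-y) < 1 := by
  calc x * Real.exp (-y) ≤ b ^ m * Real.exp (-y) := by gcongr
    _ = Real.exp (m * Real.log b - y) := by
      rw [← Real.log_pow, sub_eq_add_neg, Real.exp_add, Real.exp_log (pow_pos hb m)]
    _ < 1 := Real.exp_lt_one_iff.2 (sub_neg.2 hy)

theorem mul_le_choose_two_mul {n q : ℕ} {r k β : ℝ} (hr : 0 < r) (hk : 0 ≤ k) (hβ : 0 ≤ β)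
    (hq : 0 < q) (hqn : q ≤ n) (hgap : 1 / 4 + 22 / q ≤ (1 - 1 / r - β) / 2) :
    (1 / 4 + 21 / q) * n ^ 2 * (r * k) ≤ n.choose 2 * (r * k - k - β * (r * k)) := by
  have hq' : (0 : ℝ) < q := by exact_mod_cast hq
  have hqn' : (q : ℝ) ≤ n := by exact_mod_cast hqn
  have hone : 1 ≤ (n : ℝ) / q := (one_le_div hq').2 hqn'
  have hn : (1 / 4 + 21 / q) * n ≤ (n - 1 : ℝ) * ((1 - 1 / r - β) / 2) := by
    have hle : (1 - 1 / r - β) / 2 ≤ 1 := by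
      have : 0 ≤ 1 / r := by positivity
      linarith
    calc (1 / 4 + 21 / q) * (n : ℝ) = (1 / 4 + 22 / q) * n - n / q := by ring
      _ ≤ (1 - 1 / r - β) / 2 * n - (1 - 1 / r - β) / 2 :=
        sub_le_sub (by gcongr) (hle.trans hone)
      _ = _ := by ring
  rw [Nat.cast_choose_two]
  calc (1 / 4 + 21 / q) * n ^ 2 * (r * k) = (1 / 4 + 21 / q) * n * (n * (r * k)) := by ring
    _ ≤ (n - 1) * ((1 - 1 / r - β) / 2) * (n * (r * k)) := by gcongr
    _ = _ := by field_simp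

theorem listRamsey_triangle_le_sq {β : ℝ} (hβ : 0 ≤ β) {r q t k : ℕ} (hr : 0 < r) (hq : 0 < q)
    (ht : 0 < t) (hk : 0 < k) (hgap : (1 / 4 + 22 / q : ℝ) ≤ (1 - 1 / r - β) / 2)
    (hlog : 8 * r * q ^ 2 * k * Real.log ((q * t) ^ 4 + 1) < β ^ k * (q * t)) :
    listRamsey (⊤ : SimpleGraph (Fin 3)) k ≤ (q * t) ^ 2 := by
  obtain ⟨𝓖, hcard, hsize, hcover⟩ :=
    exists_triangleFree_containers hq ht (Fintype.card_fin ((q * t) ^ 2))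
  have hqD : q ≤ q * t := Nat.le_mul_of_pos_right q ht
  have hqlarge : 2 ≤ q := by
    have hq' : (0 : ℝ) < q := by exact_mod_cast hq
    have hinv : (0 : ℝ) ≤ 1 / r := by positivity
    have h22 : (22 / q : ℝ) ≤ 1 := by linarith
    rw [div_le_one hq'] at h22
    exact_mod_cast (by linarith : (2 : ℝ) ≤ q)
  refine listRamsey_le_of_containers (Nat.mul_pos hr hk) (Nat.le_mul_of_pos_left k hr) hβ 𝓖
    (fun G hG => ?_) (fun G hG => hcover G (SimpleGraph.cliqueFree_iff_top_free.2 hG)) ?_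
  · have hG' := hsize G hG
    rw [Fintype.card_fin] at hG'
    push_cast
    calc (G.edgeSet.ncard * (r * k) : ℝ) ≤ (1 / 4 + 21 / q) * ((q * t) ^ 2 : ℕ) ^ 2 * (r * k) := by
          gcongr
      _ ≤ _ := mul_le_choose_two_mul (by positivity) (by positivity) hβ hq
        (hqD.trans (Nat.le_self_pow two_ne_zero _)) hgap
  · have hcard' : (#𝓖 ^ (r * k) : ℝ) ≤
        ((q * t : ℝ) ^ 4 + 1) ^ (2 * q ^ 2 * (q * t) ^ 3 * (r * k)) := by
      rw [pow_mul _ _ (r * k)]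
      exact_mod_cast Nat.pow_le_pow_left hcard (r * k)
    refine mul_exp_neg_lt_one_of_le_pow (by positivity) hcard' ?_
    push_cast
    calc 2 * q ^ 2 * (q * t) ^ 3 * (r * k) * Real.log ((q * t) ^ 4 + 1)
        = (q * t) ^ 3 / 4 * (8 * r * q ^ 2 * k * Real.log ((q * t) ^ 4 + 1)) := by ring
      _ < (q * t) ^ 3 / 4 * (β ^ k * (q * t)) := by gcongr
      _ = ((q * t : ℕ) : ℝ) ^ 4 / 4 * β ^ k := by
        push_cast
        ring
      _ ≤ ((q * t) ^ 2).choose 2 * β ^ k := by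
        gcongr
        exact pow_four_div_four_le_choose_two (hqlarge.trans hqD)

theorem exists_listRamsey_triangle_le_sq {β : ℝ} (hβ : 0 ≤ β) (hβ2 : β < 1 / 2) :
    ∃ q : ℕ, 0 < q ∧ ∃ K : ℝ, 0 ≤ K ∧ ∀ t k : ℕ, 0 < t → 0 < k →
      K * k * Real.log ((q * t) ^ 4 + 1) < β ^ k * (q * t) →
        listRamsey (⊤ : SimpleGraph (Fin 3)) k ≤ (q * t) ^ 2 := by
  have hδ : 0 < 1 / 2 - β := sub_pos.2 hβ2
  obtain ⟨r, hr⟩ := exists_nat_gt (2 / (1 / 2 - β))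
  obtain ⟨q, hq⟩ := exists_nat_gt (88 / (1 / 2 - β))
  have hr' : (0 : ℝ) < r := (by positivity : 0 < 2 / (1 / 2 - β)).trans hr
  have hq' : (0 : ℝ) < q := (by positivity : 0 < 88 / (1 / 2 - β)).trans hq
  have hgap : (1 / 4 + 22 / q : ℝ) ≤ (1 - 1 / r - β) / 2 := by
    have hrδ : 2 / r < 1 / 2 - β := (div_lt_comm₀ hr' hδ).2 hr
    have hqδ : 88 / q < 1 / 2 - β := (div_lt_comm₀ hq' hδ).2 hq
    ring_nf at hrδ hqδ ⊢
    linarith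
  exact ⟨q, by exact_mod_cast hq', 8 * r * q ^ 2, by positivity, fun t k ht hk =>
    listRamsey_triangle_le_sq hβ (by exact_mod_cast hr') (by exact_mod_cast hq') ht hk hgap⟩

theorem eventually_exists_scale {ρ β b : ℝ} (hρ : 1 ≤ ρ) (hβ : 1 < β * ρ) (hb : ρ ^ 2 < b) {q : ℕ}
    (hq : 0 < q) {K : ℝ} (hK : 0 ≤ K) :
    ∀ᶠ k : ℕ in Filter.atTop, ∃ t : ℕ, 0 < t ∧ ((q * t : ℝ)) ^ 2 ≤ b ^ k ∧
      K * k * Real.log ((q * t) ^ 4 + 1) < β ^ k * (q * t) := by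
  have hβpos : 0 < β := pos_of_mul_pos_left (zero_lt_one.trans hβ) (zero_le_one.trans hρ)
  have hb1 : 1 < b := (one_le_pow₀ hρ).trans_lt hb
  have hsize : ∀ᶠ k : ℕ in Filter.atTop, (2 * q : ℝ) ^ 2 ≤ (b / ρ ^ 2) ^ k :=
    (tendsto_pow_atTop_atTop_of_one_lt ((one_lt_div (by positivity)).2 hb)).eventually_ge_atTop _
  have hdecay := (tendsto_pow_const_div_const_pow_of_one_lt 2 hβ).const_mul
    (K * (Real.log 2 + 2 * Real.log b))
  rw [mul_zero] at hdecay
  filter_upwards [hsize, hdecay.eventually_lt_const one_pos, Filter.eventually_ge_atTop 1]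
    with k hsize hdecay hk
  have hρk : 1 ≤ ρ ^ k := one_le_pow₀ hρ
  set t := ⌈ρ ^ k⌉₊
  have hρt : ρ ^ k ≤ t := Nat.le_ceil _
  have htρ : (t : ℝ) ≤ 2 * ρ ^ k := by
    linarith [Nat.ceil_lt_add_one (zero_le_one.trans hρk)]
  have hq1 : (1 : ℝ) ≤ q := by exact_mod_cast hq
  have hsq : (q * t : ℝ) ^ 2 ≤ b ^ k := by
    rw [div_pow, le_div_iff₀ (by positivity)] at hsize
    calc (q * t : ℝ) ^ 2 ≤ (q * (2 * ρ ^ k)) ^ 2 := by gcongr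
      _ = (2 * q) ^ 2 * (ρ ^ 2) ^ k := by ring
      _ ≤ b ^ k := hsize
  have hlog : Real.log ((q * t) ^ 4 + 1) ≤ k * (Real.log 2 + 2 * Real.log b) := by
    have hk1 : (1 : ℝ) ≤ k := by exact_mod_cast hk
    have hbk : 1 ≤ b ^ k := one_le_pow₀ hb1.le
    calc Real.log ((q * t) ^ 4 + 1) ≤ Real.log (2 * (b ^ k) ^ 2) :=
          Real.log_le_log (by positivity) (by nlinarith [sq_nonneg (q * t : ℝ)])
      _ = Real.log 2 + k * (2 * Real.log b) := by
        rw [Real.log_mul two_ne_zero (by positivity), Real.log_pow, Real.log_pow]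
        push_cast
        ring
      _ ≤ k * (Real.log 2 + 2 * Real.log b) := by
        nlinarith [Real.log_pos one_lt_two]
  refine ⟨t, Nat.ceil_pos.2 (by linarith), hsq, ?_⟩
  calc K * k * Real.log ((q * t) ^ 4 + 1) ≤ K * k * (k * (Real.log 2 + 2 * Real.log b)) := by
        gcongr
    _ = K * (Real.log 2 + 2 * Real.log b) * k ^ 2 := by ring
    _ < (β * ρ) ^ k := by rwa [← mul_div_assoc, div_lt_one (by positivity)] at hdecay
    _ = β ^ k * (1 * ρ ^ k) := by rw [mul_pow, one_mul]
    _ ≤ β ^ k * (q * t) := by gcongr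

theorem list_ramsey_triangle_upper (ε : ℝ) (hε : 0 < ε) :
    ∃ k₀ : ℕ, ∀ k : ℕ, k₀ ≤ k →
      (listRamsey (⊤ : SimpleGraph (Fin 3)) k : ℝ) ≤ (4 + ε) ^ k := by
  obtain ⟨ρ, hρ, hρε⟩ : ∃ ρ : ℝ, 2 < ρ ∧ ρ ^ 2 < 4 + ε :=
    ⟨√(4 + ε / 2), Real.lt_sqrt_of_sq_lt (by linarith), by
      rw [Real.sq_sqrt (by positivity)]
      linarith⟩
  obtain ⟨β, hρβ, hβ⟩ := exists_between (one_div_lt_one_div_of_lt two_pos hρ)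
  have hρ0 : 0 < ρ := two_pos.trans hρ
  have hβ0 : 0 < β := (one_div_pos.2 hρ0).trans hρβ
  obtain ⟨q, hq, K, hK, hramsey⟩ := exists_listRamsey_triangle_le_sq hβ0.le hβ
  have hscale := eventually_exists_scale (by linarith) ((div_lt_iff₀ hρ0).1 hρβ) hρε hq hK
  obtain ⟨k₀, hk₀⟩ := Filter.eventually_atTop.1 (hscale.and (Filter.eventually_gt_atTop 0))
  refine ⟨k₀, fun k hk => ?_⟩
  obtain ⟨⟨t, ht, hsize, hlog⟩, hkpos⟩ := hk₀ k hk
  exact le_trans (by exact_mod_cast hramsey t k ht hkpos hlog) hsize
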